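/- Let B = B_q(α,γ,δ,b) be a multivariate BCH code with γ = {k}, δ = {δ_k} and b = {b_k}, for some k ∈ {1,…,s}. If r_k = q − 1, then d_α*(B) = δ_k and dim_{F_q}(B) = (r_k − δ_k + 1)·∏_{j≠k} r_j. -/

import Mathlib

open Classical

noncomputable section

namespace AbelianCodes

/-- The index set `I = Z_{r 0} × ⋯ × Z_{r (s-1)}`. -/
abbrev Idx {s : ℕ} (r : Fin s → ℕ) : Type := ∀ k, ZMod (r k)

variable {F : Type*} [Field F]

/-- The support of a hypermatrix. -/
def hsupp {s : ℕ} {r : Fin s → ℕ} (M : Idx r → F) : Set (Idx r) := {i | M i ≠ 0}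

/-- The hypercolumn `H_M(k,b)` of a hypermatrix, viewed as an `(s-1)`-dimensional
hypermatrix indexed by `∏_{j ≠ k} Z_{r j}`. -/
def hypercol {s : ℕ} {r : Fin (s+1) → ℕ} (M : Idx r → F) (k : Fin (s+1)) (b : ZMod (r k)) :
    Idx (fun j => r (k.succAbove j)) → F :=
  fun i => M (k.insertNth b i)

/-- `ω_M(k,b)`: the number of consecutive zero hypercolumns
`H_M(k,b+1), H_M(k,b+2), …` (indices modulo `r k`). -/
def runLen {s : ℕ} {r : Fin (s+1) → ℕ} (M : Idx r → F) (k : Fin (s+1)) (b : ZMod (r k)) : ℕ :=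
  ((Finset.Ico 1 (r k)).filter
    (fun j => ∀ m : ℕ, m ∈ Finset.Icc 1 j → hypercol M k (b + (m : ZMod (r k))) = 0)).card

/-- The apparent distance `d*(M)` of a hypermatrix, defined recursively on the
number of variables.  (A `0`-dimensional hypermatrix is a scalar, of apparent
distance `1` if nonzero and `0` otherwise; with this convention the `1`-dimensional
case becomes `max {ω_M(b)+1 : a_b ≠ 0}` and the higher-dimensional case becomes
`max_k max {(ω_M(k,b)+1)·d*(H_M(k,b)) : H_M(k,b) ≠ 0}`, since zero hypermatrices
have apparent distance `0`.) -/
def apd : {s : ℕ} → (r : Fin s → ℕ) → (Idx r → F) → ℕ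
  | 0, _, M => if M finZeroElim = 0 then 0 else 1
  | _+1, r, M =>
      Finset.univ.sup fun k =>
        Finset.univ.sup fun b : Fin (r k) =>
          (runLen M k ((b : ℕ) : ZMod (r k)) + 1) *
            apd (fun j => r (k.succAbove j)) (hypercol M k ((b : ℕ) : ZMod (r k)))

/-- The `q^t`-orbit `Q_t(a)` of `a ∈ I`. -/
def qOrbit {s : ℕ} (r : Fin s → ℕ) (q t : ℕ) (a : Idx r) : Set (Idx r) :=
  {i | ∃ n : ℕ, ∀ k, i k = (q : ZMod (r k)) ^ (t * n) * a k}

/-- `D` is a union of `q^t`-orbits. -/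
def OrbitUnion {s : ℕ} (r : Fin s → ℕ) (q t : ℕ) (D : Set (Idx r)) : Prop :=
  ∀ a ∈ D, qOrbit r q t a ⊆ D

/-- The hypermatrix afforded by `D ⊆ I`: entry `0` at indices in `D`, entry `1` elsewhere. -/
def afforded {s : ℕ} (r : Fin s → ℕ) (D : Set (Idx r)) : Idx r → F :=
  fun i => if i ∈ D then 0 else 1

/-- `M` is a `q^t`-orbits hypermatrix, i.e. the hypermatrix afforded by some union
of `q^t`-orbits. -/
def IsOrbitMx {s : ℕ} (r : Fin s → ℕ) (q t : ℕ) (M : Idx r → F) : Prop :=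
  ∃ D : Set (Idx r), OrbitUnion r q t D ∧ M = afforded r D

/-- The minimum apparent distance `mad(M) = min {d*(P) : P a q^t-orbits hypermatrix,
`0 ≠ P ≤ M`}`, where `P ≤ M` means `supp P ⊆ supp M`. -/
def mad {s : ℕ} (r : Fin s → ℕ) (q t : ℕ) (M : Idx r → F) : ℕ :=
  sInf {d | ∃ P : Idx r → F, IsOrbitMx r q t P ∧ P ≠ 0 ∧ hsupp P ⊆ hsupp M ∧ apd r P = d}

/-- The `q^t`-cyclotomic coset of `b` modulo `r`. -/
def cycCoset (r q t : ℕ) (b : ZMod r) : Set (ZMod r) :=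
  {x | ∃ n : ℕ, x = (q : ZMod r) ^ (t * n) * b}



variable {F : Type*} [Field F] {L : Type*} [Field L] [Algebra F L]

/-- An abelian code: a subspace of the group algebra `F[∏ Z_{r k}]` (identified
with the space of coefficient functions `I → F`) which is closed under all
translations, i.e. an ideal. -/
def IsAbelianCode {s : ℕ} {r : Fin s → ℕ} (C : Submodule F (Idx r → F)) : Prop :=
  ∀ f ∈ C, ∀ a : Idx r, (fun i => f (i - a)) ∈ C

/-- Convolution: the multiplication of the group algebra in the coefficient
function picture. -/
def conv {s : ℕ} {r : Fin s → ℕ} [∀ k, NeZero (r k)] (f g : Idx r → F) : Idx r → F :=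
  fun i => ∑ u : Idx r, f u * g (i - u)

/-- The (discrete) Fourier transform `φ_{α,f}(j) = f(α^j)` of a coefficient
function `f : I → F` with respect to `α`, with values in the extension `L`. -/
def fourier {s : ℕ} {r : Fin s → ℕ} [∀ k, NeZero (r k)] (α : Fin s → L) (f : Idx r → F) :
    Idx r → L :=
  fun j => ∑ i : Idx r, algebraMap F L (f i) * ∏ k, α k ^ ((i k).val * (j k).val)

/-- The Hamming weight of a codeword. -/
def wt {s : ℕ} {r : Fin s → ℕ} [∀ k, NeZero (r k)] (f : Idx r → F) : ℕ :=
  (Finset.univ.filter fun i : Idx r => f i ≠ 0).card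

/-- The minimum distance of a code. -/
def dmin {s : ℕ} {r : Fin s → ℕ} [∀ k, NeZero (r k)] (C : Submodule F (Idx r → F)) : ℕ :=
  sInf {w | ∃ f ∈ C, f ≠ (0 : Idx r → F) ∧ wt f = w}

/-- The defining set `D_α(C) = {a ∈ I : f(α^a) = 0 for all f ∈ C}`. -/
def defSet {s : ℕ} (r : Fin s → ℕ) [∀ k, NeZero (r k)] (α : Fin s → L)
    (C : Submodule F (Idx r → F)) : Set (Idx r) :=
  {a | ∀ f ∈ C, fourier α f a = 0}

/-- The apparent distance of a code `C` with respect to `α`: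
`d_α*(C) = min {d*(M(φ_{α,e})) : 0 ≠ e = e² ∈ C}`. -/
def dStarAlpha {s : ℕ} (r : Fin s → ℕ) [∀ k, NeZero (r k)] (α : Fin s → L)
    (C : Submodule F (Idx r → F)) : ℕ :=
  sInf {d | ∃ e, e ∈ C ∧ e ≠ (0 : Idx r → F) ∧ conv e e = e ∧ apd r (fourier α e) = d}

/-- The apparent distance of a code: `d*(C) = max {d_β*(C) : β ∈ U}`, where `U`
is the set of tuples of primitive roots of unity in `L`. -/
def dStarCode {s : ℕ} (r : Fin s → ℕ) [∀ k, NeZero (r k)] (L : Type*) [Field L] [Algebra F L]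
    (C : Submodule F (Idx r → F)) : ℕ :=
  sSup {d | ∃ α : Fin s → L, (∀ k, IsPrimitiveRoot (α k) (r k)) ∧ dStarAlpha r α C = d}

/-- The defining set of the multivariate BCH code `B_q(α,γ,δ,b)`:
`∪_{k∈γ} ∪_{l=0}^{δ_k−2} ∪_{i ∈ I(k, b_k+l)} Q(i)`. -/
def bchDefSet {s : ℕ} (r : Fin s → ℕ) (q : ℕ) (γ : Finset (Fin s)) (δ b : Fin s → ℕ) :
    Set (Idx r) :=
  ⋃ k ∈ γ, ⋃ l ∈ Finset.range (δ k - 1),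
    ⋃ i ∈ {i : Idx r | i k = ((b k + l : ℕ) : ZMod (r k))}, qOrbit r q 1 i

/-!
Evaluation at the points `α ^ j` is the discrete Fourier transform of the finite ring `Idx r` for
a primitive additive character, hence injective and multiplicative on convolutions. An abelian code
`C` and the code of all words whose transform vanishes off `defSet r α C` are complementary: a
linear functional killing both has a convolution kernel whose transform squares to zero. Hence `C`
contains the idempotent whose transform is the indicator of `(defSet r α C)ᶜ`. The transforms of
the two codes are supported on complementary sets, which bound their dimensions; as the dimensions
add up, both bounds are attained.

If `r k` divides `q - 1`, a `q`-orbit never leaves a hyperplane `i k = c`, so the defining set of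
`B` is the union of just `δ - 1` cyclically consecutive hyperplanes. A nonzero hypermatrix
vanishing there has a nonzero hypercolumn followed by at least `δ - 1` zero ones, so its apparent
distance is at least `δ`. The indicator of the complement attains this bound: it has only `δ - 1`
zero hypercolumns in direction `k`, and it is constant in every other direction.
-/

section Fourier

variable {R : Type*} [CommRing R] [Fintype R] {A : Type*} [CommRing A]

/-- The discrete Fourier transform on a finite commutative ring with respect to an additive
character `ψ`; for the character `rootChar` of `Idx r` it is `fourier` with coefficients
already extended to the larger field. -/
def dft (ψ : AddChar R A) : (R → A) →ₗ[A] (R → A) where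
  toFun f j := ∑ i, f i * ψ (i * j)
  map_add' f g := by ext j; simp only [Pi.add_apply, add_mul, Finset.sum_add_distrib]
  map_smul' c f := by
    ext j; simp only [Pi.smul_apply, smul_eq_mul, mul_assoc, Finset.mul_sum, RingHom.id_apply]

lemma dft_apply (ψ : AddChar R A) (f : R → A) (j : R) :
    dft ψ f j = ∑ i, f i * ψ (i * j) := rfl

lemma dft_convolution (ψ : AddChar R A) (f g : R → A) :
    dft ψ (fun i => ∑ u, f u * g (i - u)) = dft ψ f * dft ψ g := by
  ext j
  rw [Pi.mul_apply, dft_apply, dft_apply, dft_apply, Finset.sum_mul_sum]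
  simp only [Finset.sum_mul]
  rw [Finset.sum_comm]
  refine Finset.sum_congr rfl fun u _ => ?_
  rw [← Equiv.sum_comp (Equiv.addRight u) fun i => f u * g (i - u) * ψ (i * j)]
  refine Finset.sum_congr rfl fun i _ => ?_
  rw [Equiv.coe_addRight, add_sub_cancel_right, add_mul, AddChar.map_add_eq_mul]
  ring

variable [IsDomain A] {ψ : AddChar R A}

lemma sum_dft_mul_addChar_neg (hψ : ψ.IsPrimitive) (f : R → A) (x : R) :
    ∑ j, dft ψ f j * ψ (-(x * j)) = Fintype.card R * f x :=
  calc ∑ j, dft ψ f j * ψ (-(x * j))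
      = ∑ i, f i * ∑ j, ψ (j * (i - x)) := by
        simp only [dft_apply, Finset.sum_mul, Finset.mul_sum, mul_assoc,
          ← AddChar.map_add_eq_mul]
        rw [Finset.sum_comm]
        refine Finset.sum_congr rfl fun i _ => Finset.sum_congr rfl fun j _ => ?_
        ring_nf
    _ = ∑ i, f i * if i = x then (Fintype.card R : A) else 0 := by
        simp only [AddChar.sum_mulShift _ hψ, sub_eq_zero, Nat.cast_ite, Nat.cast_zero]
    _ = Fintype.card R * f x := by
        simp only [mul_ite, mul_zero, Finset.sum_ite_eq', Finset.mem_univ, if_true, mul_comm]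

lemma natCast_card_ne_zero_of_isPrimitive (hψ : ψ.IsPrimitive) : (Fintype.card R : A) ≠ 0 := by
  intro hcard
  obtain ⟨p, hp⟩ := CharP.exists A
  have hp_dvd : p ∣ Fintype.card R := (CharP.cast_eq_zero_iff A p _).1 hcard
  have : Fact p.Prime := ⟨(CharP.char_is_prime_or_zero A p).resolve_right fun h0 =>
    Fintype.card_ne_zero (Nat.eq_zero_of_zero_dvd (h0 ▸ hp_dvd))⟩
  obtain ⟨a, ha⟩ := exists_prime_addOrderOf_dvd_card p hp_dvd
  have ha0 : a ≠ 0 := by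
    rintro rfl
    exact (Fact.out : p.Prime).one_lt.ne (addOrderOf_zero.symm.trans ha)
  -- In characteristic `p` the only `p`-th root of unity is `1`, so `ψ` is trivial on `R * a`.
  refine hψ ha0 (DFunLike.ext _ _ fun x => ?_)
  have hpow : ψ (a * x) ^ p = 1 := by
    rw [← AddChar.map_nsmul_eq_pow, ← smul_mul_assoc, ← ha, addOrderOf_nsmul_eq_zero, zero_mul,
      AddChar.map_zero_eq_one]
  rw [AddChar.mulShift_apply, AddChar.one_apply]
  exact frobenius_inj A p (by rw [frobenius_def, hpow, map_one])

lemma dft_injective (hψ : ψ.IsPrimitive) : Function.Injective (dft ψ) := by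
  intro f g hfg
  ext x
  refine mul_left_cancel₀ (natCast_card_ne_zero_of_isPrimitive hψ) ?_
  rw [← sum_dft_mul_addChar_neg hψ, ← sum_dft_mul_addChar_neg hψ, hfg]

end Fourier

section AbelianCode

variable {s : ℕ} {r : Fin s → ℕ} [∀ k, NeZero (r k)]

/-- The additive character `i ↦ ∏ k, α k ^ i k` of the ring `Idx r = ∏ k, ZMod (r k)`, by which
evaluation of polynomials at the points `α ^ j` becomes a discrete Fourier transform. -/
def rootChar {A : Type*} [CommMonoid A] {α : Fin s → A} (hα : ∀ k, α k ^ r k = 1) :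
    AddChar (Idx r) A :=
  ∏ k, (AddChar.zmodChar (r k) (hα k)).compAddMonoidHom
    (Pi.evalAddMonoidHom (fun k => ZMod (r k)) k)

lemma rootChar_apply {A : Type*} [CommMonoid A] {α : Fin s → A} (hα : ∀ k, α k ^ r k = 1)
    (i : Idx r) : rootChar hα i = ∏ k, AddChar.zmodChar (r k) (hα k) (i k) := by
  simp only [rootChar, AddChar.prod_apply, AddChar.compAddMonoidHom_apply,
    Pi.evalAddMonoidHom_apply]

lemma rootChar_single {A : Type*} [CommMonoid A] {α : Fin s → A} (hα : ∀ k, α k ^ r k = 1)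
    (k : Fin s) (x : ZMod (r k)) :
    rootChar hα (Pi.single k x : Idx r) = AddChar.zmodChar (r k) (hα k) x := by
  rw [rootChar_apply, Fintype.prod_eq_single k, Pi.single_eq_same]
  intro l hl
  rw [Pi.single_eq_of_ne hl, AddChar.map_zero_eq_one]

lemma isPrimitive_rootChar {A : Type*} [CommMonoid A] {α : Fin s → A}
    (hα : ∀ k, IsPrimitiveRoot (α k) (r k)) :
    (rootChar fun k => (hα k).pow_eq_one).IsPrimitive := by
  intro a ha htriv
  obtain ⟨k, hk⟩ := Function.ne_iff.1 ha
  refine AddChar.zmodChar_primitive_of_primitive_root (r k) (hα k) hk (DFunLike.ext _ _ fun x => ?_)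
  rw [AddChar.mulShift_apply, ← rootChar_single (fun k => (hα k).pow_eq_one), Pi.single_mul_right,
    ← AddChar.mulShift_apply, htriv]
  rfl

lemma fourier_eq_dft {α : Fin s → L} (hα : ∀ k, α k ^ r k = 1) (f : Idx r → F) :
    fourier α f = dft (rootChar hα) (algebraMap F L ∘ f) := by
  ext j
  simp only [fourier, dft_apply, rootChar_apply, Function.comp_apply, Pi.mul_apply]
  refine Finset.sum_congr rfl fun i _ => congrArg _ (Finset.prod_congr rfl fun k _ => ?_)
  rw [AddChar.zmodChar_apply, ZMod.val_mul, ← pow_eq_pow_mod _ (hα k)]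

lemma fourier_add (α : Fin s → L) (f g : Idx r → F) :
    fourier α (f + g) = fourier α f + fourier α g := by
  ext j
  simp only [fourier, Pi.add_apply, map_add, add_mul, Finset.sum_add_distrib]

lemma fourier_smul (α : Fin s → L) (c : F) (f : Idx r → F) :
    fourier α (c • f) = algebraMap F L c • fourier α f := by
  ext j
  simp only [fourier, Pi.smul_apply, smul_eq_mul, map_mul, Finset.mul_sum, mul_assoc]

lemma fourier_zero (α : Fin s → L) : fourier α (0 : Idx r → F) = 0 := by
  ext j
  simp only [fourier, Pi.zero_apply, map_zero, zero_mul, Finset.sum_const_zero]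

lemma fourier_single_zero_one (α : Fin s → L) :
    fourier α (Pi.single 0 1 : Idx r → F) = 1 := by
  ext j
  rw [fourier, Fintype.sum_eq_single 0]
  · simp
  · intro i hi
    rw [Pi.single_eq_of_ne hi, map_zero, zero_mul]

lemma fourier_injective {α : Fin s → L} (hα : ∀ k, IsPrimitiveRoot (α k) (r k)) :
    Function.Injective (fourier (r := r) (F := F) α) := by
  intro f g hfg
  rw [fourier_eq_dft fun k => (hα k).pow_eq_one, fourier_eq_dft fun k => (hα k).pow_eq_one] at hfg
  exact (algebraMap F L).injective.comp_left (dft_injective (isPrimitive_rootChar hα) hfg)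

lemma fourier_conv {α : Fin s → L} (hα : ∀ k, α k ^ r k = 1) (f g : Idx r → F) :
    fourier α (conv f g) = fourier α f * fourier α g := by
  simp only [fourier_eq_dft hα, ← dft_convolution]
  congr 1
  ext i
  simp only [conv, Function.comp_apply, map_sum, map_mul]

lemma conv_single (f : Idx r → F) (a : Idx r) : conv f (Pi.single a 1) = fun i => f (i - a) := by
  ext i
  rw [conv, Fintype.sum_eq_single (i - a), sub_sub_cancel, Pi.single_eq_same, mul_one]
  intro u hu
  rw [Pi.single_eq_of_ne, mul_zero]
  rintro rfl
  exact hu (sub_sub_cancel i u).symm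

lemma conv_kernel_apply (φ : (Idx r → F) →ₗ[F] F) (f : Idx r → F) (a : Idx r) :
    conv f (fun i => φ (Pi.single (-i) 1)) a = φ fun i => f (i + a) := by
  rw [LinearMap.pi_apply_eq_sum_univ φ fun i => f (i + a), ← Equiv.sum_comp (Equiv.subRight a)]
  refine Finset.sum_congr rfl fun u _ => ?_
  have hsingle : (Pi.single (-(a - u)) 1 : Idx r → F) = fun i => if u - a = i then 1 else 0 := by
    ext i
    rw [neg_sub, Pi.single_apply]
    exact if_congr eq_comm rfl rfl
  rw [Equiv.subRight_apply, sub_add_cancel, smul_eq_mul, ← hsingle]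

lemma IsAbelianCode.conv_kernel_eq_zero {C : Submodule F (Idx r → F)} (hC : IsAbelianCode C)
    {φ : (Idx r → F) →ₗ[F] F} (hφ : C ≤ LinearMap.ker φ) {f : Idx r → F} (hf : f ∈ C) :
    conv f (fun i => φ (Pi.single (-i) 1)) = 0 := by
  ext a
  rw [conv_kernel_apply]
  simpa only [sub_neg_eq_add] using! hφ (hC f hf (-a))

/-- The code of all words vanishing at `α ^ a` for every `a ∈ D`; unlike for a defining set, no
closure of `D` under `q`-orbits is demanded. -/
def vanishingCode (F : Type*) [Field F] [Algebra F L] (α : Fin s → L) (D : Set (Idx r)) :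
    Submodule F (Idx r → F) where
  carrier := {f | ∀ a ∈ D, fourier α f a = 0}
  add_mem' hf hg a ha := by rw [fourier_add, Pi.add_apply, hf a ha, hg a ha, add_zero]
  zero_mem' a _ := by rw [fourier_zero, Pi.zero_apply]
  smul_mem' c f hf a ha := by rw [fourier_smul, Pi.smul_apply, hf a ha, smul_zero]

lemma mem_vanishingCode {α : Fin s → L} {D : Set (Idx r)} {f : Idx r → F} :
    f ∈ vanishingCode F α D ↔ ∀ a ∈ D, fourier α f a = 0 := Iff.rfl

lemma isAbelianCode_vanishingCode {α : Fin s → L} (hα : ∀ k, α k ^ r k = 1) (D : Set (Idx r)) :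
    IsAbelianCode (vanishingCode F α D) := by
  intro f hf a
  rw [← conv_single, mem_vanishingCode, fourier_conv hα]
  exact fun j hj => mul_eq_zero_of_left (hf j hj) _

lemma le_vanishingCode_defSet (α : Fin s → L) (C : Submodule F (Idx r → F)) :
    C ≤ vanishingCode F α (defSet r α C) := fun f hf _ ha => ha f hf

lemma IsAbelianCode.sup_vanishingCode_compl_defSet {α : Fin s → L}
    (hα : ∀ k, IsPrimitiveRoot (α k) (r k)) {C : Submodule F (Idx r → F)} (hC : IsAbelianCode C) :
    C ⊔ vanishingCode F α (defSet r α C)ᶜ = ⊤ := by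
  have hα1 : ∀ k, α k ^ r k = 1 := fun k => (hα k).pow_eq_one
  by_contra hne
  obtain ⟨φ, hφ0, hφ⟩ := Submodule.exists_le_ker_of_lt_top _ (lt_top_iff_ne_top.2 hne)
  obtain ⟨hφC, hφV⟩ := sup_le_iff.1 hφ
  -- The convolution kernel of `φ` is annihilated by `C`, so it lies in the second summand, hence
  -- is annihilated by itself.
  set c : Idx r → F := fun i => φ (Pi.single (-i) 1) with hc
  have hcV : c ∈ vanishingCode F α (defSet r α C)ᶜ := by
    intro a ha
    obtain ⟨g, hg, hga⟩ : ∃ g ∈ C, fourier α g a ≠ 0 := by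
      simpa only [defSet, Set.mem_compl_iff, Set.mem_ofPred_eq, not_forall, exists_prop] using ha
    have hgc := congrArg (fun f => fourier α f a) (hC.conv_kernel_eq_zero hφC hg)
    rw [fourier_conv hα1, fourier_zero] at hgc
    exact (mul_eq_zero.1 hgc).resolve_left hga
  have hc0 : c = 0 := fourier_injective hα <| by
    have hcc := (isAbelianCode_vanishingCode hα1 _).conv_kernel_eq_zero hφV hcV
    have hsq := fourier_conv hα1 c c
    rw [hcc, fourier_zero] at hsq
    rw [fourier_zero]
    exact funext fun a => mul_self_eq_zero.1 (congrFun hsq a).symm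
  refine hφ0 (LinearMap.ext fun f => ?_)
  have hfc := conv_kernel_apply φ f 0
  rw [← hc, hc0] at hfc
  simpa [conv] using hfc.symm

lemma IsAbelianCode.isCompl_vanishingCode {α : Fin s → L}
    (hα : ∀ k, IsPrimitiveRoot (α k) (r k)) {C : Submodule F (Idx r → F)} (hC : IsAbelianCode C) :
    IsCompl C (vanishingCode F α (defSet r α C)ᶜ) := by
  refine ⟨Submodule.disjoint_def.2 fun f hfC hfV => fourier_injective hα ?_,
    codisjoint_iff.2 (hC.sup_vanishingCode_compl_defSet hα)⟩
  ext a
  rw [fourier_zero]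
  by_cases ha : a ∈ defSet r α C
  exacts [ha f hfC, hfV a ha]

lemma IsAbelianCode.exists_mem_fourier_eq_indicator {α : Fin s → L}
    (hα : ∀ k, IsPrimitiveRoot (α k) (r k)) {C : Submodule F (Idx r → F)} (hC : IsAbelianCode C) :
    ∃ e ∈ C, fourier α e = (defSet r α C)ᶜ.indicator 1 := by
  have hone : (Pi.single 0 1 : Idx r → F) ∈ C ⊔ vanishingCode F α (defSet r α C)ᶜ := by
    rw [hC.sup_vanishingCode_compl_defSet hα]
    exact Submodule.mem_top
  obtain ⟨e, he, e', he', hsum⟩ := Submodule.mem_sup.1 hone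
  refine ⟨e, he, funext fun a => ?_⟩
  by_cases ha : a ∈ defSet r α C
  · rw [Set.indicator_of_notMem (Set.notMem_compl_iff.2 ha), ha e he]
  · rw [Set.indicator_of_mem ha, ← fourier_single_zero_one (F := F) α, ← hsum, fourier_add,
      Pi.add_apply, he' a ha, add_zero]

lemma finrank_vanishingCode_le {α : Fin s → L} (hα : ∀ k, IsPrimitiveRoot (α k) (r k))
    (D : Set (Idx r)) : Module.finrank F (vanishingCode F α D) ≤ Dᶜ.ncard := by
  let v := Module.finBasis F (vanishingCode F α D)
  have hindep : LinearIndependent L fun i => fourier α (v i : Idx r → F) := by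
    simp only [fourier_eq_dft fun k => (hα k).pow_eq_one]
    exact ((linearIndependent_algebraMap_comp_iff (R := F) (S := L)).2 <|
      v.linearIndependent.map' _ (Submodule.ker_subtype _)).map' _
        (LinearMap.ker_eq_bot.2 (dft_injective (isPrimitive_rootChar hα)))
  have hextend : (fun i => fourier α (v i : Idx r → F)) =
      Function.ExtendByZero.linearMap L (Subtype.val : ↥Dᶜ → Idx r) ∘
        fun i a => fourier α (v i : Idx r → F) a := by
    ext i a
    rw [Function.comp_apply, Function.ExtendByZero.linearMap_apply]
    by_cases ha : a ∈ D
    · rw [(v i).2 a ha, Function.extend_apply' _ _ _ fun ⟨x, hx⟩ => x.2 (hx ▸ ha), Pi.zero_apply]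
    · exact (Subtype.val_injective.extend_apply (fun a : ↥Dᶜ => fourier α (v i : Idx r → F) a) 0
        ⟨a, ha⟩).symm
  rw [hextend] at hindep
  have hcard := (hindep.of_comp _).fintype_card_le_finrank
  rwa [Fintype.card_fin, Module.finrank_fintype_fun_eq_card, ← Nat.card_eq_fintype_card,
    Nat.card_coe_set_eq] at hcard

lemma IsAbelianCode.finrank_eq_ncard_compl_defSet {α : Fin s → L}
    (hα : ∀ k, IsPrimitiveRoot (α k) (r k)) {C : Submodule F (Idx r → F)} (hC : IsAbelianCode C) :
    Module.finrank F C = (defSet r α C)ᶜ.ncard := by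
  have hC_le : Module.finrank F C ≤ (defSet r α C)ᶜ.ncard :=
    (Submodule.finrank_mono (le_vanishingCode_defSet α C)).trans (finrank_vanishingCode_le hα _)
  have hV_le := finrank_vanishingCode_le (F := F) hα (defSet r α C)ᶜ
  have hsum := Submodule.finrank_add_eq_of_isCompl (hC.isCompl_vanishingCode hα)
  have hcard := Set.ncard_add_ncard_compl (defSet r α C)
  rw [compl_compl] at hV_le
  rw [Module.finrank_fintype_fun_eq_card, ← Nat.card_eq_fintype_card] at hsum
  omega

lemma IsAbelianCode.exists_idempotent {α : Fin s → L} (hα : ∀ k, IsPrimitiveRoot (α k) (r k))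
    {C : Submodule F (Idx r → F)} (hC : IsAbelianCode C) (hD : defSet r α C ≠ Set.univ) :
    ∃ e ∈ C, e ≠ 0 ∧ conv e e = e ∧ fourier α e = (defSet r α C)ᶜ.indicator 1 := by
  obtain ⟨e, he, hfourier⟩ := hC.exists_mem_fourier_eq_indicator hα
  refine ⟨e, he, ?_, fourier_injective hα ?_, hfourier⟩
  · rintro rfl
    rw [fourier_zero, eq_comm, Set.indicator_eq_zero'] at hfourier
    simp [hD] at hfourier
  · rw [fourier_conv fun k => (hα k).pow_eq_one, hfourier, ← Set.inter_indicator_one,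
      Set.inter_self]

lemma IsAbelianCode.le_dStarAlpha {α : Fin s → L} (hα : ∀ k, IsPrimitiveRoot (α k) (r k))
    {C : Submodule F (Idx r → F)} (hC : IsAbelianCode C) (hD : defSet r α C ≠ Set.univ) {d : ℕ}
    (hd : ∀ f ∈ C, f ≠ 0 → d ≤ apd r (fourier α f)) : d ≤ dStarAlpha r α C := by
  obtain ⟨e, he, he0, hidem, -⟩ := hC.exists_idempotent hα hD
  refine le_csInf ⟨_, e, he, he0, hidem, rfl⟩ ?_
  rintro _ ⟨f, hf, hf0, -, rfl⟩
  exact hd f hf hf0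

lemma IsAbelianCode.dStarAlpha_le {α : Fin s → L} (hα : ∀ k, IsPrimitiveRoot (α k) (r k))
    {C : Submodule F (Idx r → F)} (hC : IsAbelianCode C) (hD : defSet r α C ≠ Set.univ) :
    dStarAlpha r α C ≤ apd r ((defSet r α C)ᶜ.indicator (1 : Idx r → L)) := by
  obtain ⟨e, he, he0, hidem, hfourier⟩ := hC.exists_idempotent hα hD
  exact Nat.sInf_le ⟨e, he, he0, hidem, by rw [hfourier]⟩

end AbelianCode

section CyclicInterval

/-- The interval `{b, b + 1, …, b + (N - 1)}` of residues, read cyclically. -/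
def cyclicInterval {n : ℕ} (b : ZMod n) (N : ℕ) : Finset (ZMod n) :=
  (Finset.range N).image fun l : ℕ => b + (l : ZMod n)

lemma mem_cyclicInterval {n : ℕ} {b x : ZMod n} {N : ℕ} :
    x ∈ cyclicInterval b N ↔ ∃ l < N, b + (l : ZMod n) = x := by
  simp only [cyclicInterval, Finset.mem_image, Finset.mem_range]

lemma card_cyclicInterval {n : ℕ} (b : ZMod n) {N : ℕ} (hN : N ≤ n) :
    (cyclicInterval b N).card = N := by
  rw [cyclicInterval, Finset.card_image_of_injOn, Finset.card_range]
  intro i hi j hj hij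
  exact Nat.ModEq.eq_of_lt_of_lt ((ZMod.natCast_eq_natCast_iff _ _ _).1 (add_left_cancel hij))
    ((Finset.mem_range.1 hi).trans_le hN) ((Finset.mem_range.1 hj).trans_le hN)

lemma exists_not_and_forall_add_of_cyclicInterval {n : ℕ} [NeZero n] {p : ZMod n → Prop}
    {b : ZMod n} {N : ℕ} (hp : ∃ x, ¬p x) (hN : ∀ x ∈ cyclicInterval b N, p x) :
    ∃ c, ¬p c ∧ ∀ m ∈ Finset.Icc 1 N, p (c + (m : ZMod n)) := by
  -- Walk backwards from `b - 1` until `p` fails.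
  have hex : ∃ t : ℕ, ¬p (b - 1 - (t : ZMod n)) := by
    obtain ⟨x, hx⟩ := hp
    exact ⟨(b - 1 - x).val, by rwa [ZMod.natCast_zmod_val, sub_sub_cancel]⟩
  refine ⟨_, Nat.find_spec hex, fun m hm => ?_⟩
  obtain ⟨hm1, hmN⟩ := Finset.mem_Icc.1 hm
  set t := Nat.find hex
  obtain hmt | htm := le_or_gt m t
  · have hprev := not_not.1 (Nat.find_min hex (Nat.sub_lt (hm1.trans hmt) hm1))
    rwa [Nat.cast_sub hmt, ← sub_add] at hprev
  · refine hN _ (mem_cyclicInterval.2 ⟨m - (1 + t), by omega, ?_⟩)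
    rw [Nat.cast_sub (by omega), Nat.cast_add, Nat.cast_one]
    ring

end CyclicInterval

section ApparentDistance

variable {K : Type*} [Field K]

section Hypercolumn

variable {s : ℕ} {r : Fin (s + 1) → ℕ} {M : Idx r → K}

lemma hypercol_ne_zero {i : Idx r} (hi : M i ≠ 0) (k : Fin (s + 1)) :
    hypercol M k (i k) ≠ 0 := by
  intro h0
  have hentry := congrFun h0 (k.removeNth i)
  rw [hypercol, Fin.insertNth_self_removeNth] at hentry
  exact hi hentry

lemma runLen_eq_ncard (M : Idx r → K) (k : Fin (s + 1)) (b : ZMod (r k)) :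
    runLen M k b = {j | j ∈ Finset.Ico 1 (r k) ∧
      ∀ m ∈ Finset.Icc 1 j, hypercol M k (b + (m : ZMod (r k))) = 0}.ncard := by
  rw [runLen, ← Set.ncard_coe_finset]
  congr 1
  ext j
  exact @Finset.mem_filter _ _ (_) _ _

lemma runLen_eq_zero {k : Fin (s + 1)} {b : ZMod (r k)} (h : hypercol M k (b + 1) ≠ 0) :
    runLen M k b = 0 := by
  rw [runLen_eq_ncard]
  convert Set.ncard_empty ℕ
  refine Set.eq_empty_of_forall_notMem fun j ⟨hj, hzero⟩ => h ?_
  have h1 := hzero 1 (Finset.mem_Icc.2 ⟨le_rfl, (Finset.mem_Ico.1 hj).1⟩)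
  rwa [Nat.cast_one] at h1

lemma runLen_le_ncard_hypercol_eq_zero (k : Fin (s + 1)) [NeZero (r k)] (b : ZMod (r k)) :
    runLen M k b ≤ {x | hypercol M k x = 0}.ncard := by
  rw [runLen_eq_ncard]
  refine Set.ncard_le_ncard_of_injOn (fun j : ℕ => b + (j : ZMod (r k))) ?_ ?_
  · rintro j ⟨hj, hzero⟩
    exact hzero j (Finset.mem_Icc.2 ⟨(Finset.mem_Ico.1 hj).1, le_rfl⟩)
  · rintro i ⟨hi, -⟩ j ⟨hj, -⟩ hij
    exact Nat.ModEq.eq_of_lt_of_lt ((ZMod.natCast_eq_natCast_iff _ _ _).1 (add_left_cancel hij))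
      (Finset.mem_Ico.1 hi).2 (Finset.mem_Ico.1 hj).2

lemma le_runLen {k : Fin (s + 1)} [NeZero (r k)] {b : ZMod (r k)} {N : ℕ}
    (hb : hypercol M k b ≠ 0) (hN : ∀ m ∈ Finset.Icc 1 N, hypercol M k (b + (m : ZMod (r k))) = 0) :
    N ≤ runLen M k b := by
  have hlt : N < r k := by
    by_contra! hle
    refine hb ?_
    have hcycle := hN (r k) (Finset.mem_Icc.2 ⟨NeZero.one_le, hle⟩)
    rwa [ZMod.natCast_self, add_zero] at hcycle
  calc N = (Finset.Icc 1 N : Set ℕ).ncard := by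
        rw [Set.ncard_coe_finset, Nat.card_Icc, Nat.add_sub_cancel]
    _ ≤ runLen M k b := by
        rw [runLen_eq_ncard]
        refine Set.ncard_le_ncard (fun j hj => ?_)
          ((Finset.Ico 1 (r k)).finite_toSet.subset fun j hj => hj.1)
        obtain ⟨hj1, hjN⟩ := Finset.mem_Icc.1 hj
        exact ⟨Finset.mem_Ico.2 ⟨hj1, hjN.trans_lt hlt⟩,
          fun m hm => hN m (Finset.Icc_subset_Icc_right hjN hm)⟩

lemma mul_apd_hypercol_le_apd (M : Idx r → K) (k : Fin (s + 1)) [NeZero (r k)] (b : ZMod (r k)) :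
    (runLen M k b + 1) * apd (fun j => r (k.succAbove j)) (hypercol M k b) ≤ apd r M := by
  have hle := Finset.le_sup (f := fun b : Fin (r k) => (runLen M k ((b : ℕ) : ZMod (r k)) + 1) *
    apd (fun j => r (k.succAbove j)) (hypercol M k ((b : ℕ) : ZMod (r k))))
    (Finset.mem_univ ⟨b.val, ZMod.val_lt b⟩)
  rw [apd]
  refine le_trans ?_ (Finset.le_sup (Finset.mem_univ k))
  simpa only [ZMod.natCast_zmod_val] using hle

lemma apd_le {d : ℕ} (h : ∀ (k : Fin (s + 1)) (b : ZMod (r k)),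
    (runLen M k b + 1) * apd (fun j => r (k.succAbove j)) (hypercol M k b) ≤ d) : apd r M ≤ d := by
  rw [apd]
  exact Finset.sup_le fun k _ => Finset.sup_le fun b _ => h k b

end Hypercolumn

lemma apd_zero {s : ℕ} (r : Fin s → ℕ) : apd r (0 : Idx r → K) = 0 := by
  induction s with
  | zero => simp [apd]
  | succ s ih => exact Nat.le_zero.1 (apd_le fun k b => (mul_eq_zero_of_right _ (ih _)).le)

lemma one_le_apd {s : ℕ} (r : Fin s → ℕ) [∀ k, NeZero (r k)] {M : Idx r → K} (hM : M ≠ 0) :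
    1 ≤ apd r M := by
  obtain ⟨i, hi⟩ := Function.ne_iff.1 hM
  induction s with
  | zero => rw [apd, if_neg (Subsingleton.elim i finZeroElim ▸ hi)]
  | succ s ih =>
    have hcol := hypercol_ne_zero hi 0
    obtain ⟨j, hj⟩ := Function.ne_iff.1 hcol
    exact (one_le_mul le_add_self (ih _ hcol j hj)).trans (mul_apd_hypercol_le_apd M 0 (i 0))

lemma mul_apd_hypercol_of_hypercol_add_one_eq {s : ℕ} {r : Fin (s + 1) → ℕ}
    {M : Idx r → K} {k : Fin (s + 1)} {b : ZMod (r k)} (h : hypercol M k (b + 1) = hypercol M k b) :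
    (runLen M k b + 1) * apd (fun j => r (k.succAbove j)) (hypercol M k b) =
      apd (fun j => r (k.succAbove j)) (hypercol M k b) := by
  by_cases hb : hypercol M k b = 0
  · rw [hb, apd_zero, mul_zero]
  · rw [runLen_eq_zero (h ▸ hb), zero_add, one_mul]

lemma apd_const_le_one {s : ℕ} (r : Fin s → ℕ) (x : K) : apd r (fun _ : Idx r => x) ≤ 1 := by
  induction s with
  | zero => rw [apd]; split_ifs <;> simp
  | succ s ih => exact apd_le fun k b =>
      (mul_apd_hypercol_of_hypercol_add_one_eq rfl).trans_le (ih _)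

lemma apd_comp_apply_le {s : ℕ} (r : Fin s → ℕ) [∀ k, NeZero (r k)] (k : Fin s)
    (g : ZMod (r k) → K) :
    apd r (fun i => g (i k)) ≤ {x | g x = 0}.ncard + 1 := by
  induction s with
  | zero => exact k.elim0
  | succ s ih =>
    refine apd_le fun j b => ?_
    obtain rfl | ⟨l, rfl⟩ := Fin.eq_self_or_eq_succAbove j k
    · have hcol : ∀ x, hypercol (fun i : Idx r => g (i k)) k x = fun _ => g x := fun x =>
        funext fun i => congrArg g (Fin.insertNth_apply_same ..)
      have hrun : runLen (fun i : Idx r => g (i k)) k b ≤ {x | g x = 0}.ncard :=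
        (runLen_le_ncard_hypercol_eq_zero k b).trans <|
          Set.ncard_le_ncard fun x hx => congrFun ((hcol x).symm.trans hx) 0
      rw [hcol]
      exact (Nat.mul_le_mul (Nat.succ_le_succ hrun) (apd_const_le_one _ _)).trans_eq (mul_one _)
    · have hcol : ∀ x, hypercol (fun i : Idx r => g (i (j.succAbove l))) j x = fun i => g (i l) :=
        fun x => funext fun i => congrArg g (Fin.insertNth_apply_succAbove ..)
      rw [mul_apd_hypercol_of_hypercol_add_one_eq (by rw [hcol, hcol]), hcol]
      exact ih (fun m => r (j.succAbove m)) l g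

lemma add_one_le_apd_of_cyclicInterval {s : ℕ} {r : Fin s → ℕ} [∀ k, NeZero (r k)]
    {M : Idx r → K} (hM : M ≠ 0) {k : Fin s} {b : ZMod (r k)} {N : ℕ}
    (hzero : ∀ i, i k ∈ cyclicInterval b N → M i = 0) : N + 1 ≤ apd r M := by
  cases s with
  | zero => exact k.elim0
  | succ s =>
    obtain ⟨i, hi⟩ := Function.ne_iff.1 hM
    have hcol : ∀ x ∈ cyclicInterval b N, hypercol M k x = 0 := fun x hx =>
      funext fun j => hzero _ <| by rwa [Fin.insertNth_apply_same]
    obtain ⟨c, hc, hrun⟩ := exists_not_and_forall_add_of_cyclicInterval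
      ⟨i k, hypercol_ne_zero hi k⟩ hcol
    calc N + 1 ≤ (runLen M k c + 1) * 1 := by
          rw [mul_one]
          exact Nat.succ_le_succ (le_runLen hc hrun)
      _ ≤ (runLen M k c + 1) * apd (fun j => r (k.succAbove j)) (hypercol M k c) :=
          Nat.mul_le_mul_left _ (one_le_apd _ hc)
      _ ≤ apd r M := mul_apd_hypercol_le_apd M k c

lemma apd_indicator_compl_le {s : ℕ} (r : Fin s → ℕ) [∀ k, NeZero (r k)] (k : Fin s)
    (W : Finset (ZMod (r k))) :
    apd r ({i : Idx r | i k ∈ W}ᶜ.indicator (1 : Idx r → K)) ≤ W.card + 1 := by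
  let g : ZMod (r k) → K := (W : Set (ZMod (r k)))ᶜ.indicator 1
  have hzero : {x | g x = 0} = W := by
    ext x
    simp [g]
  rw [← Set.ncard_coe_finset, ← hzero]
  exact apd_comp_apply_le r k g

end ApparentDistance

section SlabDefiningSet

variable {s : ℕ} (r : Fin s → ℕ)

lemma ncard_setOf_apply_mem [∀ k, NeZero (r k)] (k : Fin s) (W : Finset (ZMod (r k))) :
    {i : Idx r | i k ∈ W}.ncard = W.card * ∏ j ∈ Finset.univ.erase k, r j := by
  have hpi : {i : Idx r | i k ∈ W} =
      ↑(Fintype.piFinset (Function.update (fun j => (Finset.univ : Finset (ZMod (r j)))) k W)) := by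
    ext i
    rw [Finset.mem_coe, Fintype.mem_piFinset, Set.mem_ofPred_eq]
    refine ⟨fun hi j => ?_, fun hi => by simpa only [Function.update_self] using hi k⟩
    obtain rfl | hj := eq_or_ne j k
    · rwa [Function.update_self]
    · rw [Function.update_of_ne hj]
      exact Finset.mem_univ _
  rw [hpi, Set.ncard_coe_finset, Fintype.card_piFinset,
    ← Finset.mul_prod_erase _ _ (Finset.mem_univ k), Function.update_self]
  refine congrArg _ (Finset.prod_congr rfl fun j hj => ?_)
  rw [Function.update_of_ne (Finset.ne_of_mem_erase hj), Finset.card_univ, ZMod.card]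

lemma ncard_compl_setOf_apply_mem [∀ k, NeZero (r k)] (k : Fin s) (W : Finset (ZMod (r k))) :
    {i : Idx r | i k ∈ W}ᶜ.ncard = (r k - W.card) * ∏ j ∈ Finset.univ.erase k, r j := by
  have hcompl : {i : Idx r | i k ∈ W}ᶜ = {i | i k ∈ Wᶜ} := by
    ext i
    simp only [Set.mem_compl_iff, Set.mem_ofPred_eq, Finset.mem_compl]
  rw [hcompl, ncard_setOf_apply_mem, Finset.card_compl, ZMod.card]

lemma bchDefSet_singleton {q : ℕ} {k : Fin s} (hq : q ≡ 1 [MOD r k]) (δ b : Fin s → ℕ) :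
    bchDefSet r q {k} δ b = {i | i k ∈ cyclicInterval (b k : ZMod (r k)) (δ k - 1)} := by
  have hq1 : (q : ZMod (r k)) = 1 := by
    rw [(ZMod.natCast_eq_natCast_iff _ _ _).2 hq, Nat.cast_one]
  ext a
  simp only [bchDefSet, qOrbit, Finset.mem_singleton, Set.iUnion_iUnion_eq_left, Finset.mem_range,
    Set.mem_iUnion, Set.mem_ofPred_eq, exists_prop, mem_cyclicInterval, Nat.cast_add]
  refine exists_congr fun l => and_congr_right fun _ => ⟨?_, fun ha => ⟨a, ha.symm, 0, ?_⟩⟩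
  · rintro ⟨i, hi, n, hn⟩
    rw [hn k, hq1, one_pow, one_mul, hi]
  · simp only [mul_zero, pow_zero, one_mul, implies_true]

end SlabDefiningSet

theorem bch_code_one_face_general
    {s : ℕ} (r : Fin s → ℕ) [∀ k, NeZero (r k)]
    {F : Type*} [Field F] (L : Type*) [Field L] [Algebra F L]
    (α : Fin s → L) (hα : ∀ k, IsPrimitiveRoot (α k) (r k))
    (k : Fin s) (b : ZMod (r k)) (δ : ℕ) (hδ1 : 1 ≤ δ) (hδ2 : δ ≤ r k)
    (B : Submodule F (Idx r → F)) (hB : IsAbelianCode B)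
    (hBdef : defSet r α B = {i | i k ∈ cyclicInterval b (δ - 1)}) :
    dStarAlpha r α B = δ ∧
    Module.finrank F B = (r k - δ + 1) * ∏ j ∈ Finset.univ.erase k, r j := by
  have hcard := card_cyclicInterval b ((Nat.sub_le δ 1).trans hδ2)
  have hncard : (defSet r α B)ᶜ.ncard = (r k - δ + 1) * ∏ j ∈ Finset.univ.erase k, r j := by
    rw [hBdef, ncard_compl_setOf_apply_mem, hcard, tsub_tsub_eq_add_tsub_of_le hδ1,
      Nat.sub_add_comm hδ2]
  have hproper : defSet r α B ≠ Set.univ := by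
    intro huniv
    rw [huniv, Set.compl_univ, Set.ncard_empty] at hncard
    exact (Nat.mul_pos (Nat.succ_pos _) (Finset.prod_pos fun j _ => NeZero.pos (r j))).ne hncard
  refine ⟨le_antisymm ?_ ?_, (hB.finrank_eq_ncard_compl_defSet hα).trans hncard⟩
  · refine (hB.dStarAlpha_le hα hproper).trans ?_
    rw [hBdef]
    exact (apd_indicator_compl_le r k _).trans_eq (by rw [hcard, Nat.sub_add_cancel hδ1])
  · refine hB.le_dStarAlpha hα hproper fun f hf hf0 => ?_
    rw [← Nat.sub_add_cancel hδ1]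
    refine add_one_le_apd_of_cyclicInterval (k := k) (b := b) ?_ fun i hi => ?_
    · exact fun h0 => hf0 (fourier_injective hα (h0.trans (fourier_zero α).symm))
    · have hi_mem : i ∈ defSet r α B := hBdef ▸ hi
      exact hi_mem f hf

/-- Let `B = B_q(α,{k},{δ_k},{b_k})` be a multivariate BCH code.
If `r_k = q − 1`, then `d_α*(B) = δ_k` and
`dim_{F_q}(B) = (r_k − δ_k + 1)·∏_{j≠k} r_j`. -/
theorem bch_code_one_face
    {s : ℕ} (r : Fin s → ℕ) [∀ k, NeZero (r k)]
    {F : Type*} [Field F] [Fintype F]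
    (hcop : ∀ k, (Fintype.card F).Coprime (r k))
    (L : Type*) [Field L] [Algebra F L]
    (α : Fin s → L) (hα : ∀ k, IsPrimitiveRoot (α k) (r k))
    (k : Fin s) (δk bk : ℕ) (hδ1 : 2 ≤ δk) (hδ2 : δk ≤ r k)
    (hrk : r k = Fintype.card F - 1)
    (B : Submodule F (Idx r → F)) (hB : IsAbelianCode B)
    (hBdef : defSet r α B = bchDefSet r (Fintype.card F) {k} (fun _ => δk) (fun _ => bk)) :
    dStarAlpha r α B = δk ∧
    Module.finrank F B = (r k - δk + 1) * ∏ j ∈ Finset.univ.erase k, r j := by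
  have hq : Fintype.card F ≡ 1 [MOD r k] :=
    ((Nat.modEq_iff_dvd' Fintype.card_pos).2 hrk.dvd).symm
  exact bch_code_one_face_general r L α hα k bk δk (one_le_two.trans hδ1) hδ2 B hB
    (hBdef.trans (bchDefSet_singleton r hq _ _))

end AbelianCodes
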